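/- Let k be a perfect field and let A and B be two complete Noetherian local commutative rings containing k such that the completed tensor product A⊗̂_k B is Noetherian. If A and B are reduced, then A⊗̂_k B is reduced. -/

import Mathlib

open TensorProduct

/-- The ideal `r = m ⊗ B + A ⊗ n` of `C = A ⊗[k] B`, where `m` and `n` are the Jacobson
radicals of `A` and `B` (for a local ring, the Jacobson radical is the maximal ideal). -/
noncomputable def tensorRadical (k A B : Type*) [Field k] [CommRing A] [CommRing B]
    [Algebra k A] [Algebra k B] : Ideal (A ⊗[k] B) :=
  Ideal.map (Algebra.TensorProduct.includeLeft (R := k) (S := k) (A := A) (B := B))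
      ((⊥ : Ideal A).jacobson) ⊔
    Ideal.map (Algebra.TensorProduct.includeRight (R := k) (A := A) (B := B))
      ((⊥ : Ideal B).jacobson)

/-- The completed tensor product `A ⊗̂[k] B`: the `r`-adic separated completion of
`C = A ⊗[k] B`, i.e. the inverse limit of the rings `C ⧸ r ^ i`. -/
noncomputable abbrev CompletedTensor (k A B : Type*) [Field k] [CommRing A] [CommRing B]
    [Algebra k A] [Algebra k B] : Type _ :=
  AdicCompletion (tensorRadical k A B) (A ⊗[k] B)

/-!
Write `r = m ⊗ B + A ⊗ n`. It suffices to show that `z ∈ r ^ M` whenever `z ^ 2 ∈ r ^ N` with `N`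
large in terms of `M`; this dependence is expressed by filters along which `z ^ 2` tends to `0`.

By Chevalley's theorem on complete local rings, it is enough to bound `z` modulo the ideals
`I ⊗ B + A ⊗ J`, where `I` and `J` run over families of ideals closed under finite intersections
and with zero intersection. For a local homomorphism `f` from `A` to a valuation ring with valuation
`v`, take `I = {x | v (f x) > v (f a)}`, under the condition that `{x | v (f x) ≥ v (f a)}` be open;
as `A` is reduced, such ideals have zero intersection because `A` has enough one-dimensional
quotient domains, each dominated by a valuation ring in which the powers of `m` shrink to `0`.

In `V ⊗ W`, with `V` and `W` valuation rings, one climbs through the finitely many values below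
`v (f a)` and below `w (g b)`. At each step the obstruction to climbing is a leading coefficient in
`κ(V) ⊗ κ(W)` whose square vanishes; since `k` is perfect, this ring is reduced.
-/

universe u v

section PerfectField

variable (k : Type*) [Field k]

theorem isDomain_tensorProduct_of_isFractionRing (F R P : Type*) [CommRing F] [Nontrivial F]
    [Algebra k F] [CommRing R] [IsDomain R] [Algebra k R] [CommRing P] [Algebra k P] [Algebra R P]
    [IsScalarTower k R P] [IsFractionRing R P] [IsDomain (F ⊗[k] R)] : IsDomain (F ⊗[k] P) := by
  let φ : F ⊗[k] R →ₐ[F] F ⊗[k] P :=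
    Algebra.TensorProduct.map (.id F F) (IsScalarTower.toAlgHom k R P)
  algebraize [φ.toRingHom]
  have : IsScalarTower F (F ⊗[k] R) (F ⊗[k] P) := .of_algebraMap_eq' φ.comp_algebraMap.symm
  have := IsLocalization.tensorProduct_tensorProduct_right k F (nonZeroDivisors R) P (by
    ext; simp [RingHom.algebraMap_toAlgebra, φ])
  refine IsLocalization.isDomain_of_le_nonZeroDivisors (R := F ⊗[k] R) (S := F ⊗[k] P)
    (M := (nonZeroDivisors R).map
      (Algebra.TensorProduct.includeRight : R →ₐ[k] F ⊗[k] R)) ?_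
  have hinj : Function.Injective (Algebra.TensorProduct.includeRight : R →ₐ[k] F ⊗[k] R) :=
    Algebra.TensorProduct.includeRight_injective (algebraMap k F).injective
  exact map_le_nonZeroDivisors_of_injective _ hinj le_rfl

theorem isDomain_tensorProduct_adjoin_of_algebraicIndependent (F : Type*) {G : Type*} [Field F]
    [Algebra k F] [Field G] [Algebra k G] {s : Set G}
    (hs : AlgebraicIndependent k ((↑) : s → G)) :
    IsDomain (F ⊗[k] IntermediateField.adjoin k s) := by
  let e : Algebra.adjoin k s ≃ₐ[k] MvPolynomial s k :=
    (hs.aevalEquiv.trans (Subalgebra.equivOfEq _ _ (by rw [Subtype.range_coe]))).symm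
  have : IsDomain (F ⊗[k] Algebra.adjoin k s) :=
    ((Algebra.TensorProduct.congr (AlgEquiv.refl : F ≃ₐ[F] F) e).trans
      (MvPolynomial.algebraTensorAlgEquiv k F)).toMulEquiv.isDomain _
  open scoped IntermediateField.algebraAdjoinAdjoin in
  exact isDomain_tensorProduct_of_isFractionRing k F (Algebra.adjoin k s) _

theorem isReduced_tensorProduct_of_isSeparable (P F G : Type*) [Field P] [CommRing F] [Field G]
    [Algebra k P] [Algebra k F] [Algebra k G] [Algebra P G] [IsScalarTower k P G]
    [Algebra.EssFiniteType P G] [Algebra.IsSeparable P G] [IsDomain (P ⊗[k] F)] :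
    IsReduced (G ⊗[k] F) := by
  let D := FractionRing (P ⊗[k] F)
  have : Algebra.FormallyEtale P G := .of_isSeparable P G
  have : IsReduced (D ⊗[P] G) := Algebra.FormallyUnramified.isReduced_of_field D _
  have hinj : Function.Injective
      (Algebra.TensorProduct.map (IsScalarTower.toAlgHom P (P ⊗[k] F) D) (AlgHom.id P G)) :=
    Module.Flat.rTensor_preserves_injective_linearMap (M := G)
      (IsScalarTower.toAlgHom P (P ⊗[k] F) D).toLinearMap (IsFractionRing.injective _ D)
  have : IsReduced ((P ⊗[k] F) ⊗[P] G) := isReduced_of_injective _ hinj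
  let e := (Algebra.TensorProduct.cancelBaseChange k P P G F).symm.trans
    (Algebra.TensorProduct.comm P G (P ⊗[k] F))
  exact isReduced_of_injective e e.injective

theorem isReduced_tensorProduct_field_of_essFiniteType [PerfectField k] (F G : Type*)
    [Field F] [Field G] [Algebra k F] [Algebra k G] [Algebra.EssFiniteType k G] :
    IsReduced (F ⊗[k] G) := by
  obtain ⟨s, hs, hsep⟩ := exists_isTranscendenceBasis_and_isSeparable_of_perfectField k G
  let P := IntermediateField.adjoin k (s : Set G)
  have : Algebra.EssFiniteType P G := .of_comp k P G
  have : IsDomain (F ⊗[k] P) := isDomain_tensorProduct_adjoin_of_algebraicIndependent k F hs.1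
  have : IsDomain (P ⊗[k] F) := (Algebra.TensorProduct.comm k P F).toMulEquiv.isDomain _
  have := isReduced_tensorProduct_of_isSeparable k P F G
  exact isReduced_of_injective (Algebra.TensorProduct.comm k F G)
    (Algebra.TensorProduct.comm k F G).injective

theorem isReduced_tensorProduct_field [PerfectField k] (F G : Type*) [Field F] [Field G]
    [Algebra k F] [Algebra k G] : IsReduced (F ⊗[k] G) := by
  apply IsReduced.tensorProduct_of_flat_of_forall_fg
  intro B hB
  have : Algebra.FiniteType k B := B.fg_iff_finiteType.mp hB
  have : Algebra.EssFiniteType k (FractionRing B) := .comp k B _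
  have := isReduced_tensorProduct_field_of_essFiniteType k F (FractionRing B)
  exact isReduced_of_injective
    (Algebra.TensorProduct.map (AlgHom.id k F) (IsScalarTower.toAlgHom k B (FractionRing B)))
    (Module.Flat.lTensor_preserves_injective_linearMap (M := F)
      (IsScalarTower.toAlgHom k B (FractionRing B)).toLinearMap (IsFractionRing.injective _ _))

end PerfectField

section Chevalley

open IsLocalRing

theorem exists_minimalFor_of_maximalIdeal_pow_le {A ι : Type*} [CommRing A] [IsNoetherianRing A]
    [IsLocalRing A] {N : ℕ} {p : ι → Prop} {F : ι → Ideal A}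
    (hF : ∀ i, p i → maximalIdeal A ^ N ≤ F i) (hp : ∃ i, p i) : ∃ i, MinimalFor p F i := by
  let I := maximalIdeal A ^ (N + 1)
  have : IsArtinianRing (A ⧸ I) := by
    refine quotient_artinian_of_mem_minimalPrimes_of_isLocalRing I
      ⟨⟨inferInstance, Ideal.pow_le_self N.succ_ne_zero⟩, fun q ⟨hq, hIq⟩ _ => ?_⟩
    exact hq.le_of_pow_le hIq
  have : IsArtinian A (A ⧸ I) :=
    isArtinian_of_surjective_algebraMap (R := A ⧸ I) Ideal.Quotient.mk_surjective
  have : WellFoundedLT (Set.Ici I) :=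
    (Submodule.comapMkQRelIso I).symm.toOrderEmbedding.wellFoundedLT
  obtain ⟨i₀, hi₀⟩ := hp
  obtain ⟨i, hi⟩ := exists_minimalFor_of_wellFoundedLT (fun _ : {i // p i} => True)
    (fun i => (⟨F i, (Ideal.pow_le_pow_right N.le_succ).trans (hF i i.2)⟩ : Set.Ici I))
    ⟨⟨i₀, hi₀⟩, trivial⟩
  exact ⟨i, i.2, fun j hj hle => hi.2 (j := ⟨j, hj⟩) trivial hle⟩

theorem exists_sub_mem_pow_and_forall_mem_sup_pow {R : Type*} [CommRing R] {I : Ideal R}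
    [IsPrecomplete I R] {K : ℕ → Ideal R} {M : ℕ} (hK : ∀ n ≥ M, K n ≤ K (n + 1) ⊔ I ^ n)
    {x : R} (hx : x ∈ K M) : ∃ y, y - x ∈ I ^ M ∧ ∀ n ≥ M, y ∈ K n ⊔ I ^ n := by
  have lift : ∀ n ≥ M, ∀ u ∈ K n, ∃ v ∈ K (n + 1), v - u ∈ I ^ n := by
    intro n hn u hu
    obtain ⟨v, hv, w, hw, rfl⟩ := Submodule.mem_sup.mp (hK n hn hu)
    exact ⟨v, hv, by simpa using hw⟩
  choose! g hgK hg using lift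
  let t : ℕ → R := Nat.rec x fun n u => if n < M then u else g n u
  have t_succ (n : ℕ) : t (n + 1) = if n < M then t n else g n (t n) := rfl
  have t_of_le : ∀ n ≤ M, t n = x := by
    intro n hn
    induction n with
    | zero => rfl
    | succ n ih => rw [t_succ, if_pos (Nat.lt_of_succ_le hn), ih (by lia)]
  have t_mem : ∀ n ≥ M, t n ∈ K n := by
    intro n hn
    induction n, hn using Nat.le_induction with
    | base => rwa [t_of_le M le_rfl]
    | succ n hn ih => simpa only [t_succ, hn.not_gt, if_false] using hgK n hn _ ih
  have t_cauchy (n : ℕ) : t (n + 1) - t n ∈ I ^ n := by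
    rcases lt_or_ge n M with hn | hn
    · simp [t_succ, hn]
    · simpa only [t_succ, hn.not_gt, if_false] using hg n hn _ (t_mem n hn)
  let s : AdicCompletion.AdicCauchySequence I R := .mk I R t fun n => by
    rw [SModEq.comm, SModEq.sub_mem, smul_eq_mul, Ideal.mul_top]
    exact t_cauchy n
  obtain ⟨y, hy⟩ : ∃ y, ∀ n, t n ≡ y [SMOD I ^ n • (⊤ : Ideal R)] := IsPrecomplete.prec' s.1 s.2
  have hyt (n : ℕ) : y - t n ∈ I ^ n := by
    simpa only [smul_eq_mul, Ideal.mul_top] using SModEq.sub_mem.mp (hy n).symm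
  refine ⟨y, by simpa only [t_of_le M le_rfl] using hyt M, fun n hn => ?_⟩
  rw [← add_sub_cancel (t n) y]
  exact Submodule.add_mem_sup (t_mem n hn) (hyt n)

theorem mem_of_forall_mem_sup_pow {A : Type*} [CommRing A] [IsNoetherianRing A] [IsLocalRing A]
    {I J : Ideal A} (hI : I ≠ ⊤) {x : A} (hx : ∀ n, x ∈ J ⊔ I ^ n) : x ∈ J := by
  rw [← Ideal.Quotient.eq_zero_iff_mem, ← Submodule.mem_bot A,
    ← Ideal.iInf_pow_smul_eq_bot_of_isLocalRing (M := A ⧸ J) I hI, Submodule.mem_iInf]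
  intro n
  obtain ⟨u, hu, v, hv, rfl⟩ := Submodule.mem_sup.mp (hx n)
  have hv' := Submodule.smul_mem_smul hv (Submodule.mem_top (x := (1 : A ⧸ J)))
  rw [Algebra.smul_def, mul_one] at hv'
  rwa [map_add, Ideal.Quotient.eq_zero_iff_mem.mpr hu, zero_add]

theorem maximalIdeal_pow_mem_pfilter {A : Type*} [CommRing A] [IsNoetherianRing A]
    [IsLocalRing A] [IsPrecomplete (maximalIdeal A) A] {S : Order.PFilter (Ideal A)}
    (hS : ∀ x, (∀ I ∈ S, x ∈ I) → x = 0) (M : ℕ) : maximalIdeal A ^ M ∈ S := by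
  have hmin (n : ℕ) : ∃ I ∈ S, ∀ J ∈ S, I ⊔ maximalIdeal A ^ n ≤ J ⊔ maximalIdeal A ^ n := by
    obtain ⟨I, hI, hImin⟩ := exists_minimalFor_of_maximalIdeal_pow_le (p := (· ∈ S))
      (F := (· ⊔ maximalIdeal A ^ n)) (fun _ _ => le_sup_right) S.nonempty
    refine ⟨I, hI, fun J hJ => ?_⟩
    exact (hImin (S.inf_mem hI hJ) (sup_le_sup_right inf_le_left _)).trans
      (sup_le_sup_right inf_le_right _)
  choose K hKS hK using hmin
  refine S.mem_of_le (fun x hx => ?_) (hKS M)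
  obtain ⟨y, hyx, hy⟩ := exists_sub_mem_pow_and_forall_mem_sup_pow
    (fun n _ => le_sup_left.trans (hK n _ (hKS (n + 1)))) hx
  have hy0 : y = 0 := by
    refine hS y fun J hJ => mem_of_forall_mem_sup_pow (maximalIdeal.isMaximal A).ne_top fun n => ?_
    have hyJ := hK (max n M) J hJ (hy _ (le_max_right n M))
    exact sup_le_sup_left (Ideal.pow_le_pow_right (le_max_left n M)) J hyJ
  simpa only [hy0, zero_sub, neg_mem_iff] using hyx

end Chevalley

section OneDimensional

open IsLocalRing

theorem krullDimLE_one_of_forall_prime_mem {R : Type*} [CommRing R] [IsDomain R]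
    [IsNoetherianRing R] {a : R} (ha : ∀ p : Ideal R, p.IsPrime → p ≠ ⊥ → a ∈ p) (ha0 : a ≠ 0) :
    Ring.KrullDimLE 1 R := by
  rw [Ring.krullDimLE_one_iff_of_noZeroDivisors]
  intro p hp0 hp
  obtain ⟨m, hm, hpm⟩ := p.exists_le_maximal hp.ne_top
  -- Each `b ∈ m` lies in a prime of height one, which is minimal over `a`; then avoid primes.
  have hcover : (m : Set R) ⊆ ⋃ q ∈ (Ideal.span {a}).minimalPrimes, (q : Set R) := by
    intro b hb
    rw [Set.mem_iUnion₂]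
    rcases eq_or_ne b 0 with rfl | hb0
    · obtain ⟨q, hq, -⟩ := Ideal.exists_minimalPrimes_le
        ((Ideal.span_singleton_le_iff_mem p).mpr (ha p hp hp0))
      exact ⟨q, hq, q.zero_mem⟩
    obtain ⟨P, hP, -⟩ := Ideal.exists_minimalPrimes_le ((Ideal.span_singleton_le_iff_mem m).mpr hb)
    have hPprime : P.IsPrime := hP.1.1
    have hbP : b ∈ P := (Ideal.span_singleton_le_iff_mem P).mp hP.1.2
    have haP : a ∈ P := ha P hPprime (Submodule.ne_bot_iff P |>.mpr ⟨b, hbP, hb0⟩)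
    obtain ⟨q, hq, hqP⟩ := Ideal.exists_minimalPrimes_le
      ((Ideal.span_singleton_le_iff_mem P).mpr haP)
    have hqprime : q.IsPrime := hq.1.1
    have hq0 : q ≠ ⊥ := by
      rintro rfl
      exact ha0 (by simpa using hq.1.2)
    have hPq : P.height ≤ q.height :=
      (Ideal.height_le_one_of_isPrincipal_of_mem_minimalPrimes _ P hP).trans
        (Order.one_le_iff_ne_zero.mpr fun h => hq0 (Ideal.height_eq_zero_iff_eq_bot.mp h))
    exact ⟨q, hq, (Ideal.eq_of_le_of_height_le q hqP hPq).ge hbP⟩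
  obtain ⟨q, hq, hmq⟩ := (Ideal.subset_union_prime_finite
    (Ideal.finite_minimalPrimes_of_isNoetherianRing R (Ideal.span {a})) ⊥ ⊥
    fun q hq _ _ => hq.1.1).mp hcover
  have hqp : q ≤ p := hq.2 ⟨hp, by simpa using ha p hp hp0⟩ (hpm.trans hmq)
  exact (hpm.antisymm (hmq.trans hqp)) ▸ hm

theorem exists_maximalIdeal_pow_le_span_singleton {R : Type*} [CommRing R] [IsDomain R]
    [IsNoetherianRing R] [IsLocalRing R] [Ring.KrullDimLE 1 R] {a : R} (ha : a ≠ 0) :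
    ∃ n, maximalIdeal R ^ n ≤ Ideal.span {a} := by
  refine Ideal.exists_pow_le_of_le_radical_of_fg ?_ (IsNoetherian.noetherian _)
  rw [Ideal.radical_eq_sInf]
  refine le_sInf fun p ⟨hap, hp⟩ => ?_
  have hp0 : p ≠ ⊥ := by
    rintro rfl
    exact ha (by simpa using hap)
  exact (eq_maximalIdeal (Ring.krullDimLE_one_iff_of_noZeroDivisors.mp ‹_› p hp0 hp)).ge

end OneDimensional

section ValuationIdeal

open IsLocalRing

/-- For a ring homomorphism `f` to a valuation ring `V` with valuation `v`, the ideal of all `x`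
with `v (f x) ≥ v c`, written additively. -/
def valuationIdeal {A V : Type*} [CommRing A] [CommRing V] (f : A →+* V) (c : V) : Ideal A :=
  (Ideal.span {c}).comap f

/-- For a ring homomorphism `f` to a valuation ring `V` with valuation `v`, the ideal of all `x`
with `v (f x) > v c`, written additively; for `c = 0` it is the kernel of `f`. -/
def strictValuationIdeal {A V : Type*} [CommRing A] [CommRing V] [IsLocalRing V] (f : A →+* V)
    (c : V) : Ideal A :=
  (maximalIdeal V * Ideal.span {c}).comap f

/-- The ideal of all `x` with `v (f x) ≥ v (f a)` is open in the `maximalIdeal A`-adic topology,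
and `v (f a)` is finite. -/
structure HasOpenValuationIdeal {A V : Type*} [CommRing A] [IsLocalRing A] [CommRing V]
    (f : A →+* V) (a : A) : Prop where
  map_ne_zero : f a ≠ 0
  exists_pow_le : ∃ n, maximalIdeal A ^ n ≤ valuationIdeal f (f a)

theorem mem_valuationIdeal {A V : Type*} [CommRing A] [CommRing V] {f : A →+* V} {c : V} {x : A} :
    x ∈ valuationIdeal f c ↔ c ∣ f x :=
  Ideal.mem_span_singleton

theorem mem_strictValuationIdeal {A V : Type*} [CommRing A] [CommRing V] [IsDomain V]
    [IsLocalRing V] {f : A →+* V} {c : V} (hc : c ≠ 0) {x : A} :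
    x ∈ strictValuationIdeal f c ↔ c ∣ f x ∧ ¬f x ∣ c := by
  rw [dvd_and_not_dvd_iff]
  simp only [strictValuationIdeal, Ideal.mem_comap, Ideal.mem_mul_span_singleton, DvdNotUnit,
    mem_maximalIdeal, mem_nonunits_iff, mul_comm, hc, ne_eq, not_false_eq_true, true_and, eq_comm]

theorem valuationIdeal_le_iff {A V : Type*} [CommRing A] [CommRing V] {f : A →+* V} {a : A}
    {c : V} :
    valuationIdeal f (f a) ≤ valuationIdeal f c ↔ c ∣ f a :=
  ⟨fun h => mem_valuationIdeal.mp (h (mem_valuationIdeal.mpr dvd_rfl)),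
    fun h => Ideal.comap_mono (Ideal.span_singleton_le_span_singleton.mpr h)⟩

namespace HasOpenValuationIdeal

variable {A V : Type*} [CommRing A] [IsLocalRing A] [CommRing V] {f : A →+* V} {a c : A}

theorem of_dvd (ha : HasOpenValuationIdeal f a) (hca : f c ∣ f a) : HasOpenValuationIdeal f c where
  map_ne_zero := ne_zero_of_dvd_ne_zero ha.map_ne_zero hca
  exists_pow_le := ha.exists_pow_le.imp fun _ h => h.trans (valuationIdeal_le_iff.mpr hca)

theorem sq [IsReduced V] (ha : HasOpenValuationIdeal f a) : HasOpenValuationIdeal f (a ^ 2) where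
  map_ne_zero := by rw [map_pow]; exact pow_ne_zero 2 ha.map_ne_zero
  exists_pow_le := by
    obtain ⟨n, hn⟩ := ha.exists_pow_le
    refine ⟨n * 2, ?_⟩
    rw [pow_mul, pow_two, Ideal.mul_le]
    intro x hx y hy
    rw [mem_valuationIdeal, map_mul, map_pow, pow_two]
    exact mul_dvd_mul (mem_valuationIdeal.mp (hn hx)) (mem_valuationIdeal.mp (hn hy))

theorem exists_pow_le_strict [IsLocalRing V] [IsLocalHom f] (ha : HasOpenValuationIdeal f a) :
    ∃ n, maximalIdeal A ^ n ≤ strictValuationIdeal f (f a) := by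
  obtain ⟨n, hn⟩ := ha.exists_pow_le
  refine ⟨n + 1, ?_⟩
  rw [pow_succ', Ideal.mul_le]
  intro x hx y hy
  rw [strictValuationIdeal, Ideal.mem_comap, map_mul]
  exact Ideal.mul_mem_mul (by rwa [← Ideal.mem_comap, maximalIdeal_comap]) (hn hy)

end HasOpenValuationIdeal

theorem exists_valuationRing_hasOpenValuationIdeal {A : Type u} [CommRing A] [IsNoetherianRing A]
    [IsLocalRing A] [IsReduced A] {a : A} (ha : a ≠ 0) :
    ∃ (V : Type u) (_ : CommRing V) (_ : IsDomain V) (_ : ValuationRing V) (f : A →+* V),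
      IsLocalHom f ∧ HasOpenValuationIdeal f a := by
  have hprime : ∃ p : Ideal A, p.IsPrime ∧ a ∉ p := by
    contrapose! ha
    exact (nilpotent_iff_mem_prime.mpr ha).eq_zero
  obtain ⟨p, ⟨hp, hap⟩, hmax⟩ := exists_maximal_of_wellFoundedGT _ hprime
  have hlocal : IsLocalHom (Ideal.Quotient.mk p) := .of_surjective _ Ideal.Quotient.mk_surjective
  have : IsLocalRing (A ⧸ p) := .of_surjective' _ Ideal.Quotient.mk_surjective
  have ha' : Ideal.Quotient.mk p a ≠ 0 := by rwa [Ne, Ideal.Quotient.eq_zero_iff_mem]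
  have : Ring.KrullDimLE 1 (A ⧸ p) := by
    refine krullDimLE_one_of_forall_prime_mem (fun q hq hq0 => ?_) ha'
    by_contra haq
    have hqp := hmax (y := q.comap (Ideal.Quotient.mk p)) ⟨hq.comap _, haq⟩
      (Ideal.mk_ker.ge.trans (Ideal.comap_mono bot_le))
    refine hq0 (le_bot_iff.mp fun x hx => ?_)
    obtain ⟨x, rfl⟩ := Ideal.Quotient.mk_surjective x
    exact Ideal.Quotient.eq_zero_iff_mem.mpr (hqp hx)
  obtain ⟨n, hn⟩ := exists_maximalIdeal_pow_le_span_singleton ha'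
  obtain ⟨V, hV, hVlocal⟩ :=
    exists_factor_valuationRing (algebraMap (A ⧸ p) (FractionRing (A ⧸ p)))
  let g : A ⧸ p →+* V := (algebraMap _ _).codRestrict V.toSubring hV
  have : IsLocalHom g := hVlocal
  have hg : Function.Injective g := fun x y hxy =>
    IsFractionRing.injective (A ⧸ p) (FractionRing (A ⧸ p)) (congrArg Subtype.val hxy)
  refine ⟨V, inferInstance, inferInstance, inferInstance, g.comp (Ideal.Quotient.mk p),
    inferInstance, (map_ne_zero_iff g hg).mpr ha', n, fun x hx => ?_⟩
  have hx' : Ideal.Quotient.mk p x ∈ maximalIdeal (A ⧸ p) ^ n := by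
    refine Ideal.pow_right_mono (map_maximalIdeal_le (Ideal.Quotient.mk p)) n ?_
    rw [← Ideal.map_pow]
    exact Ideal.mem_map_of_mem _ hx
  exact mem_valuationIdeal.mpr (map_dvd g (Ideal.mem_span_singleton.mp (hn hx')))

theorem valuationIdeal_induction {A V : Type*} [CommRing A] [IsNoetherianRing A] [IsLocalRing A]
    [CommRing V] [IsDomain V] [ValuationRing V] {f : A →+* V} {a : A}
    (ha : HasOpenValuationIdeal f a) {P : Ideal A → Prop} (top : P ⊤)
    (step : ∀ c, f c ∣ f a → P (valuationIdeal f (f c)) → P (strictValuationIdeal f (f c))) :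
    P (strictValuationIdeal f (f a)) := by
  suffices h : ∀ c, f c ∣ f a → P (valuationIdeal f (f c)) from step a dvd_rfl (h a dvd_rfl)
  intro c hca
  induction hI : valuationIdeal f (f c) using WellFoundedGT.induction generalizing c with
  | ind I ih =>
  subst hI
  by_cases hc : IsUnit (f c)
  · rwa [valuationIdeal, Ideal.span_singleton_eq_top.mpr hc, Ideal.comap_top]
  -- Among the values of `f` below that of `f c`, the value of `f b` is the largest.
  obtain ⟨n, hn⟩ := ha.exists_pow_le
  obtain ⟨b, ⟨hba, hbc, hcb⟩, hbmin⟩ := exists_minimalFor_of_maximalIdeal_pow_le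
    (p := fun b => f b ∣ f a ∧ f b ∣ f c ∧ ¬f c ∣ f b) (F := fun b => valuationIdeal f (f b))
    (fun b hb => hn.trans (valuationIdeal_le_iff.mpr hb.1))
    ⟨1, by simp, by simp, by simpa [isUnit_iff_dvd_one] using hc⟩
  have hb0 := (ha.of_dvd hba).map_ne_zero
  have hlt : valuationIdeal f (f c) < valuationIdeal f (f b) :=
    (valuationIdeal_le_iff.mpr hbc).lt_of_not_ge fun h => hcb (valuationIdeal_le_iff.mp h)
  suffices h : strictValuationIdeal f (f b) = valuationIdeal f (f c) from
    h ▸ step b hba (ih _ hlt b hba rfl)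
  ext x
  rw [mem_strictValuationIdeal hb0, mem_valuationIdeal]
  refine ⟨fun ⟨hbx, hxb⟩ => ?_,
    fun hcx => ⟨hbc.trans hcx, fun hxb => hcb (hcx.trans hxb)⟩⟩
  by_contra hcx
  have hxc := (ValuationRing.dvd_total (f c) (f x)).resolve_left hcx
  exact hxb (valuationIdeal_le_iff.mp
    (hbmin (j := x) ⟨hxc.trans hca, hxc, hcx⟩ (valuationIdeal_le_iff.mpr hbx)))

end ValuationIdeal

section TensorIdeal

/-- The ideal `I ⊗ B + A ⊗ J` of `A ⊗[k] B`. -/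
noncomputable def tensorIdeal (k : Type*) {A B : Type*} [CommRing k] [CommRing A] [CommRing B]
    [Algebra k A] [Algebra k B] (I : Ideal A) (J : Ideal B) : Ideal (A ⊗[k] B) :=
  I.map (Algebra.TensorProduct.includeLeft (R := k) (S := k) (A := A) (B := B)) ⊔
    J.map (Algebra.TensorProduct.includeRight (R := k) (A := A) (B := B))

/-- The map `id ⊗ l : A ⊗[k] B → A` for a linear form `l` on `B`. Over a field, membership in
`tensorIdeal k I J` is tested by the contractions with the forms `l` vanishing on `J`. -/
noncomputable def tensorContraction {k B : Type*} (A : Type*) [CommRing k] [CommRing A]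
    [CommRing B] [Algebra k A] [Algebra k B] (l : B →ₗ[k] k) : A ⊗[k] B →ₗ[A] A :=
  (TensorProduct.AlgebraTensorModule.rid k A A).toLinearMap ∘ₗ l.baseChange A

section CommRing

variable {k A B : Type*} [CommRing k] [CommRing A] [CommRing B] [Algebra k A] [Algebra k B]

theorem tensorContraction_tmul (l : B →ₗ[k] k) (a : A) (b : B) :
    tensorContraction A l (a ⊗ₜ b) = l b • a :=
  rfl

theorem tensorContraction_map {V W : Type*} [CommRing V] [CommRing W] [Algebra k V] [Algebra k W]
    (f : A →ₐ[k] V) (g : B →ₐ[k] W) (l : W →ₗ[k] k) (z : A ⊗[k] B) :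
    tensorContraction V l (Algebra.TensorProduct.map f g z) =
      f (tensorContraction A (l ∘ₗ g.toLinearMap) z) := by
  induction z with
  | zero => simp only [map_zero]
  | tmul a b => simp [tensorContraction_tmul]
  | add y z hy hz => simp only [map_add, hy, hz]

theorem mem_tensorIdeal_iff_map_mk_eq_zero {I : Ideal A} {J : Ideal B} {z : A ⊗[k] B} :
    z ∈ tensorIdeal k I J ↔
      Algebra.TensorProduct.map (Ideal.Quotient.mkₐ k I) (Ideal.Quotient.mkₐ k J) z = 0 := by
  have hI : RingHom.ker (Ideal.Quotient.mkₐ k I) = I := Ideal.mk_ker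
  have hJ : RingHom.ker (Ideal.Quotient.mkₐ k J) = J := Ideal.mk_ker
  rw [← RingHom.mem_ker, Algebra.TensorProduct.map_ker _ _ (Ideal.Quotient.mkₐ_surjective k I)
    (Ideal.Quotient.mkₐ_surjective k J), hI, hJ]
  rfl

theorem tensorIdeal_mono {I I' : Ideal A} {J J' : Ideal B} (hI : I ≤ I') (hJ : J ≤ J') :
    tensorIdeal k I J ≤ tensorIdeal k I' J' :=
  sup_le_sup (Ideal.map_mono hI) (Ideal.map_mono hJ)

theorem tensorIdeal_top_left (J : Ideal B) : tensorIdeal k (⊤ : Ideal A) J = ⊤ := by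
  rw [tensorIdeal, Ideal.map_top, top_sup_eq]

theorem tensorIdeal_top_right (I : Ideal A) : tensorIdeal k I (⊤ : Ideal B) = ⊤ := by
  rw [tensorIdeal, Ideal.map_top, sup_top_eq]

theorem comap_comm_tensorIdeal (I : Ideal A) (J : Ideal B) :
    (tensorIdeal k J I).comap (Algebra.TensorProduct.comm k A B) = tensorIdeal k I J := by
  refine (Ideal.map_symm (Algebra.TensorProduct.comm k A B).toRingEquiv).symm.trans ?_
  rw [tensorIdeal, Ideal.map_sup, sup_comm]
  exact congrArg₂ (· ⊔ ·) (Ideal.map_mapₐ _ (Algebra.TensorProduct.comm k A B).symm.toAlgHom)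
    (Ideal.map_mapₐ _ (Algebra.TensorProduct.comm k A B).symm.toAlgHom)

theorem tensorIdeal_pow_add_le (I : Ideal A) (J : Ideal B) (m n : ℕ) :
    tensorIdeal k I J ^ (m + n) ≤ tensorIdeal k (I ^ m) (J ^ n) := by
  rw [tensorIdeal, tensorIdeal, Ideal.map_pow, Ideal.map_pow]
  exact Ideal.sup_pow_add_le_pow_sup_pow

theorem tensorIdeal_pow_le_pow (I : Ideal A) (J : Ideal B) (n : ℕ) :
    tensorIdeal k (I ^ n) (J ^ n) ≤ tensorIdeal k I J ^ n := by
  rw [tensorIdeal, Ideal.map_pow, Ideal.map_pow]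
  exact sup_le (Ideal.pow_right_mono le_sup_left n) (Ideal.pow_right_mono le_sup_right n)

theorem tmul_one_mul_mem_tensorIdeal {I : Ideal A} {J : Ideal B} {z : A ⊗[k] B} (c : A)
    (hz : z ∈ tensorIdeal k I J) : c ⊗ₜ 1 * z ∈ tensorIdeal k (I * Ideal.span {c}) J := by
  obtain ⟨p, hp, q, hq, rfl⟩ := Submodule.mem_sup.mp hz
  rw [mul_add, mul_comm _ p, tensorIdeal, Ideal.map_mul]
  exact Submodule.add_mem_sup
    (Ideal.mul_mem_mul hp (Ideal.mem_map_of_mem _ (Ideal.mem_span_singleton_self c)))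
    (Ideal.mul_mem_left _ _ hq)

theorem one_tmul_mul_mem_tensorIdeal {I : Ideal A} {J : Ideal B} {z : A ⊗[k] B} (d : B)
    (hz : z ∈ tensorIdeal k I J) : 1 ⊗ₜ d * z ∈ tensorIdeal k I (J * Ideal.span {d}) := by
  rw [← comap_comm_tensorIdeal, Ideal.mem_comap] at hz ⊢
  simpa using tmul_one_mul_mem_tensorIdeal d hz

end CommRing

section Field

variable {k A B V W : Type*} [Field k] [CommRing A] [CommRing B] [CommRing V] [CommRing W]
  [Algebra k A] [Algebra k B] [Algebra k V] [Algebra k W]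

theorem eq_zero_of_forall_tensorContraction_eq_zero {z : A ⊗[k] B}
    (h : ∀ l : B →ₗ[k] k, tensorContraction A l z = 0) : z = 0 := by
  let b := Module.Basis.ofVectorSpace k B
  have repr_eq (i) : (Algebra.TensorProduct.basis A b).repr z i =
      tensorContraction A (b.coord i) z := by
    clear h
    induction z with
    | zero => simp only [map_zero, Finsupp.zero_apply]
    | tmul x y => simp [tensorContraction_tmul, Algebra.smul_def, mul_comm]
    | add y z hy hz => simp only [map_add, Finsupp.add_apply, hy, hz]
  refine (Algebra.TensorProduct.basis A b).ext_elem fun i => ?_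
  rw [repr_eq, h, map_zero, Finsupp.zero_apply]

theorem mem_tensorIdeal_iff_forall_tensorContraction_mem {I : Ideal A} {J : Ideal B}
    {z : A ⊗[k] B} : z ∈ tensorIdeal k I J ↔
      ∀ l : B →ₗ[k] k, J.restrictScalars k ≤ LinearMap.ker l → tensorContraction A l z ∈ I := by
  rw [mem_tensorIdeal_iff_map_mk_eq_zero]
  constructor
  · intro hz l hl
    have hz' := tensorContraction_map (Ideal.Quotient.mkₐ k I) (Ideal.Quotient.mkₐ k J)
      (Submodule.liftQ (J.restrictScalars k) l hl) z
    rw [hz, map_zero] at hz'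
    exact Ideal.Quotient.eq_zero_iff_mem.mp hz'.symm
  · intro h
    refine eq_zero_of_forall_tensorContraction_eq_zero fun l => ?_
    rw [tensorContraction_map]
    refine Ideal.Quotient.eq_zero_iff_mem.mpr (h _ fun y hy => ?_)
    have hy' : Ideal.Quotient.mk J y = 0 := Ideal.Quotient.eq_zero_iff_mem.mpr hy
    simp [hy']

theorem tensorIdeal_inf_left (I₁ I₂ : Ideal A) (J : Ideal B) :
    tensorIdeal k (I₁ ⊓ I₂) J = tensorIdeal k I₁ J ⊓ tensorIdeal k I₂ J := by
  ext z
  simp only [Ideal.mem_inf, mem_tensorIdeal_iff_forall_tensorContraction_mem, ← forall_and]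

theorem tensorIdeal_inf_right (I : Ideal A) (J₁ J₂ : Ideal B) :
    tensorIdeal k I (J₁ ⊓ J₂) = tensorIdeal k I J₁ ⊓ tensorIdeal k I J₂ := by
  simp only [← comap_comm_tensorIdeal I, tensorIdeal_inf_left, Ideal.comap_inf]

theorem comap_map_id_tensorIdeal (f : A →ₐ[k] V) (I : Ideal V) (J : Ideal B) :
    (tensorIdeal k I J).comap (Algebra.TensorProduct.map f (.id k B)) =
      tensorIdeal k (I.comap f) J := by
  ext z
  simp only [Ideal.mem_comap, mem_tensorIdeal_iff_forall_tensorContraction_mem,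
    tensorContraction_map]
  rfl

theorem comap_map_tensorIdeal (f : A →ₐ[k] V) (g : B →ₐ[k] W) (I : Ideal V) (J : Ideal W) :
    (tensorIdeal k I J).comap (Algebra.TensorProduct.map f g) =
      tensorIdeal k (I.comap f) (J.comap g) := by
  ext z
  have hz : Algebra.TensorProduct.map f g z = Algebra.TensorProduct.map f (.id k W)
      (Algebra.TensorProduct.comm k W A
        (Algebra.TensorProduct.map g (.id k A) (Algebra.TensorProduct.comm k A B z))) := by
    induction z with
    | zero => simp only [map_zero]
    | tmul a b => simp
    | add y z hy hz => simp only [map_add, hy, hz]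
  rw [Ideal.mem_comap, hz]
  simp only [← Ideal.mem_comap, comap_map_id_tensorIdeal, comap_comm_tensorIdeal]

theorem mem_tensorIdeal_of_mul_mem_left [IsDomain A] {I : Ideal A} {J : Ideal B} {c : A}
    (hc : c ≠ 0) {z : A ⊗[k] B} (hz : c ⊗ₜ 1 * z ∈ tensorIdeal k (I * Ideal.span {c}) J) :
    z ∈ tensorIdeal k I J := by
  rw [mem_tensorIdeal_iff_forall_tensorContraction_mem] at hz ⊢
  intro l hl
  have hsmul : c ⊗ₜ 1 * z = c • z := (Algebra.smul_def c z).symm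
  obtain ⟨y, hy, hyz⟩ := Ideal.mem_mul_span_singleton.mp (by
    simpa only [hsmul, map_smul] using hz l hl)
  rw [smul_eq_mul, mul_comm y] at hyz
  exact mul_left_cancel₀ hc hyz ▸ hy

theorem mem_tensorIdeal_of_mul_mem_right [IsDomain B] {I : Ideal A} {J : Ideal B} {d : B}
    (hd : d ≠ 0) {z : A ⊗[k] B} (hz : 1 ⊗ₜ d * z ∈ tensorIdeal k I (J * Ideal.span {d})) :
    z ∈ tensorIdeal k I J := by
  rw [← comap_comm_tensorIdeal, Ideal.mem_comap] at hz ⊢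
  refine mem_tensorIdeal_of_mul_mem_left hd ?_
  simpa using hz

end Field

end TensorIdeal

section LeadingCoefficient

open IsLocalRing

variable {k V W : Type*} [Field k] [CommRing V] [CommRing W] [Algebra k V] [Algebra k W]

theorem mem_tensorIdeal_maximalIdeal_of_sq_mem [PerfectField k] [IsLocalRing V] [IsLocalRing W]
    {y : V ⊗[k] W} (hy : y ^ 2 ∈ tensorIdeal k (maximalIdeal V) (maximalIdeal W)) :
    y ∈ tensorIdeal k (maximalIdeal V) (maximalIdeal W) := by
  have : IsReduced ((V ⧸ maximalIdeal V) ⊗[k] (W ⧸ maximalIdeal W)) :=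
    isReduced_tensorProduct_field k (ResidueField V) (ResidueField W)
  rw [mem_tensorIdeal_iff_map_mk_eq_zero] at hy ⊢
  rw [map_pow] at hy
  exact eq_zero_of_pow_eq_zero hy

theorem exists_leadingCoeff [IsDomain V] {c : V} {d : W} (hc : c ≠ 0) {I : Ideal V} {J : Ideal W}
    (hJ : J ≤ Ideal.span {d}) {z : V ⊗[k] W} (hl : z ∈ tensorIdeal k (Ideal.span {c}) J)
    (hr : z ∈ tensorIdeal k (I * Ideal.span {c}) (Ideal.span {d})) :
    ∃ y, ∃ u ∈ tensorIdeal k I ⊥, ∃ v ∈ tensorIdeal k ⊥ J,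
      z = c ⊗ₜ 1 * (u + 1 ⊗ₜ d * y) + v := by
  obtain ⟨t, v, hv, rfl⟩ : ∃ t, ∃ v ∈ tensorIdeal k ⊥ J, z = c ⊗ₜ 1 * t + v := by
    obtain ⟨p, hp, v, hv, rfl⟩ := Submodule.mem_sup.mp hl
    rw [Ideal.map_span, Set.image_singleton, Ideal.mem_span_singleton] at hp
    obtain ⟨t, rfl⟩ := hp
    exact ⟨t, v, Ideal.mem_sup_right hv, rfl⟩
  have ht : t ∈ tensorIdeal k I (Ideal.span {d}) := by
    refine mem_tensorIdeal_of_mul_mem_left hc ?_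
    exact (Ideal.add_mem_iff_left _ (tensorIdeal_mono bot_le hJ hv)).mp hr
  obtain ⟨u, hu, p, hp, rfl⟩ := Submodule.mem_sup.mp ht
  rw [Ideal.map_span, Set.image_singleton, Ideal.mem_span_singleton] at hp
  obtain ⟨y, rfl⟩ := hp
  exact ⟨y, u, Ideal.mem_sup_left hu, v, hv, rfl⟩

theorem sq_mem_tensorIdeal_of_leadingCoeff [IsDomain V] [IsDomain W] {c : V} {d : W} (hc : c ≠ 0)
    (hd : d ≠ 0) {I : Ideal V} {J : Ideal W} {y u v : V ⊗[k] W} (hu : u ∈ tensorIdeal k I ⊥)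
    (hv : v ∈ tensorIdeal k ⊥ (J * Ideal.span {d ^ 2}))
    (hz : (c ⊗ₜ 1 * (u + 1 ⊗ₜ d * y) + v) ^ 2 ∈
      tensorIdeal k (I * Ideal.span {c ^ 2}) (J * Ideal.span {d ^ 2})) :
    y ^ 2 ∈ tensorIdeal k I J := by
  refine mem_tensorIdeal_of_mul_mem_left (pow_ne_zero 2 hc)
    (mem_tensorIdeal_of_mul_mem_right (pow_ne_zero 2 hd) ?_)
  have hcu := tensorIdeal_mono le_rfl (bot_le (a := J * Ideal.span {d ^ 2}))
    (tmul_one_mul_mem_tensorIdeal (c ^ 2) hu)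
  have hv' := tensorIdeal_mono (bot_le (a := I * Ideal.span {c ^ 2})) le_rfl hv
  have hC : (c ^ 2) ⊗ₜ[k] (1 : W) = (c ⊗ₜ 1) ^ 2 := by
    rw [Algebra.TensorProduct.tmul_pow, one_pow]
  have hD : (1 : V) ⊗ₜ[k] (d ^ 2) = (1 ⊗ₜ d) ^ 2 := by
    rw [Algebra.TensorProduct.tmul_pow, one_pow]
  rw [hC] at hcu ⊢
  rw [hD]
  generalize c ⊗ₜ[k] (1 : W) = C at *
  generalize (1 : V) ⊗ₜ[k] d = D at *
  -- `C ^ 2 * D ^ 2 * y ^ 2` is what remains of the square without the multiples of `u` and `v`.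
  convert sub_mem hz (add_mem (Ideal.mul_mem_right (u + 2 * D * y) _ hcu)
    (Ideal.mul_mem_right (2 * C * (u + D * y) + v) _ hv')) using 1
  ring

theorem mem_tensorIdeal_maximalIdeal_mul_span [PerfectField k] [IsDomain V] [IsDomain W]
    [IsLocalRing V] [IsLocalRing W] {c : V} {d : W} (hc : c ≠ 0) (hd : d ≠ 0) {z : V ⊗[k] W}
    (hl : z ∈ tensorIdeal k (Ideal.span {c}) (maximalIdeal W * Ideal.span {d ^ 2}))
    (hr : z ∈ tensorIdeal k (maximalIdeal V * Ideal.span {c}) (Ideal.span {d}))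
    (hz : z ^ 2 ∈ tensorIdeal k (maximalIdeal V * Ideal.span {c ^ 2})
      (maximalIdeal W * Ideal.span {d ^ 2})) :
    z ∈ tensorIdeal k (maximalIdeal V * Ideal.span {c}) (maximalIdeal W * Ideal.span {d}) := by
  have hd2 : Ideal.span {d ^ 2} ≤ Ideal.span {d} :=
    Ideal.span_singleton_le_span_singleton.mpr (dvd_pow_self d two_ne_zero)
  obtain ⟨y, u, hu, v, hv, rfl⟩ := exists_leadingCoeff hc (Ideal.mul_le_right.trans hd2) hl hr
  have hy : y ∈ tensorIdeal k (maximalIdeal V) (maximalIdeal W) :=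
    mem_tensorIdeal_maximalIdeal_of_sq_mem (sq_mem_tensorIdeal_of_leadingCoeff hc hd hu hv hz)
  have hu' := tensorIdeal_mono le_rfl (bot_le (a := maximalIdeal W * Ideal.span {d}))
    (tmul_one_mul_mem_tensorIdeal c hu)
  have hy' := tmul_one_mul_mem_tensorIdeal c (one_tmul_mul_mem_tensorIdeal d hy)
  have hv' := tensorIdeal_mono (bot_le (a := maximalIdeal V * Ideal.span {c}))
    (Ideal.mul_mono_right hd2) hv
  rw [mul_add]
  exact Ideal.add_mem _ (Ideal.add_mem _ hu' hy') hv'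

end LeadingCoefficient

section Main

open IsLocalRing

section AlgHom

variable {k A B V W : Type*} [Field k] [PerfectField k] [CommRing A] [CommRing B]
  [CommRing V] [CommRing W] [IsDomain V] [IsDomain W] [ValuationRing V] [ValuationRing W]
  [Algebra k A] [Algebra k B] [Algebra k V] [Algebra k W]

theorem mem_tensorIdeal_strictValuationIdeal (f : A →ₐ[k] V) (g : B →ₐ[k] W) {c : A} {d : B}
    (hc : f c ≠ 0) (hd : g d ≠ 0) {z : A ⊗[k] B}
    (hl : z ∈ tensorIdeal k (valuationIdeal (f : A →+* V) (f c))
      (strictValuationIdeal (g : B →+* W) (g (d ^ 2))))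
    (hr : z ∈ tensorIdeal k (strictValuationIdeal (f : A →+* V) (f c))
      (valuationIdeal (g : B →+* W) (g d)))
    (hz : z ^ 2 ∈ tensorIdeal k (strictValuationIdeal (f : A →+* V) (f (c ^ 2)))
      (strictValuationIdeal (g : B →+* W) (g (d ^ 2)))) :
    z ∈ tensorIdeal k (strictValuationIdeal (f : A →+* V) (f c))
      (strictValuationIdeal (g : B →+* W) (g d)) := by
  rw [map_pow] at hl
  rw [map_pow, map_pow] at hz
  have hl' := (comap_map_tensorIdeal f g _ _).ge hl
  have hr' := (comap_map_tensorIdeal f g _ _).ge hr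
  have hz' := (comap_map_tensorIdeal f g _ _).ge hz
  rw [Ideal.mem_comap, map_pow] at hz'
  exact (comap_map_tensorIdeal f g _ _).le (mem_tensorIdeal_maximalIdeal_mul_span hc hd hl' hr' hz')

theorem eventually_mem_tensorIdeal_strictValuationIdeal [IsNoetherianRing A] [IsNoetherianRing B]
    [IsLocalRing A] [IsLocalRing B] (f : A →ₐ[k] V) (g : B →ₐ[k] W) [IsLocalHom (f : A →+* V)]
    [IsLocalHom (g : B →+* W)] {l : Filter (A ⊗[k] B)}
    (hl : ∀ n, ∀ᶠ z in l, z ^ 2 ∈ tensorIdeal k (maximalIdeal A) (maximalIdeal B) ^ n) {a : A}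
    {b : B} (ha : HasOpenValuationIdeal (f : A →+* V) a)
    (hb : HasOpenValuationIdeal (g : B →+* W) b) :
    ∀ᶠ z in l, z ∈ tensorIdeal k (strictValuationIdeal (f : A →+* V) (f a))
      (strictValuationIdeal (g : B →+* W) (g b)) := by
  refine valuationIdeal_induction ha (P := fun I => ∀ b, HasOpenValuationIdeal (g : B →+* W) b →
    ∀ᶠ z in l, z ∈ tensorIdeal k I (strictValuationIdeal (g : B →+* W) (g b))) ?_ ?_ b hb
  · intro b _
    simp only [tensorIdeal_top_left, Submodule.mem_top, Filter.eventually_true]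
  intro c hca hc b hb
  refine valuationIdeal_induction hb (P := fun J =>
    ∀ᶠ z in l, z ∈ tensorIdeal k (strictValuationIdeal (f : A →+* V) (f c)) J) ?_ ?_
  · simp only [tensorIdeal_top_right, Submodule.mem_top, Filter.eventually_true]
  intro d hdb hd
  have hc' := ha.of_dvd hca
  have hd' := hb.of_dvd hdb
  obtain ⟨m, hm⟩ := hc'.sq.exists_pow_le_strict
  obtain ⟨n, hn⟩ := hd'.sq.exists_pow_le_strict
  filter_upwards [hc (d ^ 2) hd'.sq, hd, hl (m + n)] with z hzl hzr hz
  exact mem_tensorIdeal_strictValuationIdeal f g hc'.map_ne_zero hd'.map_ne_zero hzl hzr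
    (tensorIdeal_mono hm hn (tensorIdeal_pow_add_le _ _ m n hz))

end AlgHom

theorem isPFilter_eventually_mem {R S : Type*} [Semiring R] [Semiring S] {φ : Ideal R → Ideal S}
    (htop : φ ⊤ = ⊤) (hinf : ∀ I J, φ (I ⊓ J) = φ I ⊓ φ J) (l : Filter S) :
    Order.IsPFilter {I | ∀ᶠ z in l, z ∈ φ I} := by
  refine Order.IsPFilter.of_def ⟨⊤, by simp [htop]⟩ ?_ ?_
  · intro I hI J hJ
    refine ⟨I ⊓ J, ?_, inf_le_left, inf_le_right⟩
    filter_upwards [hI, hJ] with z hzI hzJ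
    exact (hinf I J).ge ⟨hzI, hzJ⟩
  · intro I J hIJ hI
    filter_upwards [hI] with z hz
    rw [← inf_eq_left.mpr hIJ, hinf] at hz
    exact hz.2

theorem eventually_mem_apply_maximalIdeal_pow {A : Type u} {S : Type*} [CommRing A] [Semiring S]
    [IsNoetherianRing A] [IsLocalRing A] [IsReduced A] [IsPrecomplete (maximalIdeal A) A]
    {φ : Ideal A → Ideal S} (htop : φ ⊤ = ⊤) (hinf : ∀ I J, φ (I ⊓ J) = φ I ⊓ φ J) {l : Filter S}
    (h : ∀ (V : Type u) [CommRing V] [IsDomain V] [ValuationRing V] (f : A →+* V) [IsLocalHom f]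
      (a : A), HasOpenValuationIdeal f a → ∀ᶠ z in l, z ∈ φ (strictValuationIdeal f (f a)))
    (M : ℕ) : ∀ᶠ z in l, z ∈ φ (maximalIdeal A ^ M) := by
  refine maximalIdeal_pow_mem_pfilter (S := (isPFilter_eventually_mem htop hinf l).toPFilter)
    (fun x hx => ?_) M
  by_contra hx0
  obtain ⟨V, _, _, _, f, _, hfx⟩ := exists_valuationRing_hasOpenValuationIdeal hx0
  exact ((mem_strictValuationIdeal hfx.map_ne_zero).mp (hx _ (h V f x hfx))).2 dvd_rfl

theorem eventually_mem_tensorIdeal_maximalIdeal_pow {k : Type*} {A : Type u} {B : Type v}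
    [Field k] [PerfectField k] [CommRing A] [CommRing B] [IsNoetherianRing A] [IsNoetherianRing B]
    [IsLocalRing A] [IsLocalRing B] [IsPrecomplete (maximalIdeal A) A]
    [IsPrecomplete (maximalIdeal B) B] [IsReduced A] [IsReduced B] [Algebra k A] [Algebra k B]
    {l : Filter (A ⊗[k] B)}
    (hl : ∀ n, ∀ᶠ z in l, z ^ 2 ∈ tensorIdeal k (maximalIdeal A) (maximalIdeal B) ^ n) (M : ℕ) :
    ∀ᶠ z in l, z ∈ tensorIdeal k (maximalIdeal A) (maximalIdeal B) ^ M := by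
  suffices h : ∀ᶠ z in l, z ∈ tensorIdeal k (maximalIdeal A ^ M) (maximalIdeal B ^ M) by
    filter_upwards [h] with z hz using tensorIdeal_pow_le_pow _ _ M hz
  refine eventually_mem_apply_maximalIdeal_pow (φ := fun I => tensorIdeal k I (maximalIdeal B ^ M))
    (tensorIdeal_top_left _) (fun _ _ => tensorIdeal_inf_left _ _ _) ?_ M
  intro V _ _ _ f hf a ha
  refine eventually_mem_apply_maximalIdeal_pow (tensorIdeal_top_right _)
    (tensorIdeal_inf_right _) ?_ M
  intro W _ _ _ g hg b hb
  let _ : Algebra k V := (f.comp (algebraMap k A)).toAlgebra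
  let _ : Algebra k W := (g.comp (algebraMap k B)).toAlgebra
  let f' : A →ₐ[k] V := ⟨f, fun _ => rfl⟩
  let g' : B →ₐ[k] W := ⟨g, fun _ => rfl⟩
  have : IsLocalHom (f' : A →+* V) := hf
  have : IsLocalHom (g' : B →+* W) := hg
  exact eventually_mem_tensorIdeal_strictValuationIdeal f' g' hl ha hb

end Main

theorem isReduced_adicCompletion {R : Type*} [CommRing R] {I : Ideal R}
    (h : ∀ l : Filter R, (∀ n, ∀ᶠ z in l, z ^ 2 ∈ I ^ n) → ∀ M, ∀ᶠ z in l, z ∈ I ^ M) :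
    IsReduced (AdicCompletion I R) := by
  refine (isReduced_iff_pow_one_lt 2 one_lt_two).mpr fun x hx => ?_
  obtain ⟨z, rfl⟩ := AdicCompletion.mk_surjective I R x
  have sq_mem (n) : z n ^ 2 ∈ I ^ n := by
    have hn := congrArg (AdicCompletion.evalₐ I n) hx
    rwa [map_pow, AdicCompletion.evalₐ_mk, map_zero, ← map_pow,
      Ideal.Quotient.eq_zero_iff_mem] at hn
  have eventually_mem : ∀ M, ∀ᶠ n in Filter.atTop, z n ∈ I ^ M := by
    refine h (Filter.atTop.map z) fun n => ?_
    rw [Filter.eventually_map]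
    filter_upwards [Filter.eventually_ge_atTop n] with i hi
      using Ideal.pow_le_pow_right hi (sq_mem i)
  refine AdicCompletion.ext_evalₐ fun M => ?_
  obtain ⟨n, hn, hMn⟩ := ((eventually_mem M).and (Filter.eventually_ge_atTop M)).exists
  rw [AdicCompletion.evalₐ_mk, map_zero]
  exact (AdicCompletion.Ideal.mk_eq_mk I hMn z).symm.trans (Ideal.Quotient.eq_zero_iff_mem.mpr hn)

theorem tensorRadical_eq_tensorIdeal (k A B : Type*) [Field k] [CommRing A] [CommRing B]
    [IsLocalRing A] [IsLocalRing B] [Algebra k A] [Algebra k B] :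
    tensorRadical k A B =
      tensorIdeal k (IsLocalRing.maximalIdeal A) (IsLocalRing.maximalIdeal B) := by
  rw [tensorRadical, tensorIdeal, IsLocalRing.jacobson_eq_maximalIdeal ⊥ bot_ne_top,
    IsLocalRing.jacobson_eq_maximalIdeal ⊥ bot_ne_top]

theorem isReduced_completedTensor_general (k A B : Type*) [Field k] [PerfectField k]
    [CommRing A] [CommRing B] [IsNoetherianRing A] [IsNoetherianRing B]
    [IsLocalRing A] [IsLocalRing B]
    [IsPrecomplete (IsLocalRing.maximalIdeal A) A]
    [IsPrecomplete (IsLocalRing.maximalIdeal B) B]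
    [Algebra k A] [Algebra k B] [IsReduced A] [IsReduced B] :
    IsReduced (CompletedTensor k A B) := by
  refine isReduced_adicCompletion ?_
  rw [tensorRadical_eq_tensorIdeal]
  exact fun _ => eventually_mem_tensorIdeal_maximalIdeal_pow

/-- **Statement 14.** Let `k` be a perfect field and `A` and `B` two complete Noetherian
local commutative rings containing `k` such that `A ⊗̂[k] B` is Noetherian. If `A` and
`B` are reduced, then `A ⊗̂[k] B` is reduced. -/
theorem isReduced_completedTensor (k A B : Type*) [Field k] [PerfectField k]
    [CommRing A] [CommRing B] [IsNoetherianRing A] [IsNoetherianRing B]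
    [IsLocalRing A] [IsLocalRing B]
    [IsAdicComplete (IsLocalRing.maximalIdeal A) A]
    [IsAdicComplete (IsLocalRing.maximalIdeal B) B]
    [Algebra k A] [Algebra k B]
    (hE : IsNoetherianRing (CompletedTensor k A B))
    (hA : IsReduced A) (hB : IsReduced B) :
    IsReduced (CompletedTensor k A B) := by
  exact isReduced_completedTensor_general k A B
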